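/- (AGM inequality) For all m×m positive definite complex matrices A and B, 2(A^{-1} + B^{-1})^{-1} ≤ A # B ≤ (1/2)(A + B) in the Loewner order. -/

import Mathlib

/-!
Conjugation by `a^{1/2}` reduces the upper bound to `c^{1/2} ≤ (1 + c) / 2`, where
`c = a^{-1/2} b a^{-1/2}`, and this holds because `(1 - c^{1/2})² ≥ 0`. Since
`(a # b)⁻¹ = a⁻¹ # b⁻¹` and inversion is antitone, the lower bound for `a` and `b` is the upper
bound for `a⁻¹` and `b⁻¹`.
-/

open Matrix
open scoped ComplexOrder

noncomputable def matFun {m : ℕ} (f : ℝ → ℝ) (A : Matrix (Fin m) (Fin m) ℂ) :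
    Matrix (Fin m) (Fin m) ℂ :=
  if hA : A.IsHermitian then
    (hA.eigenvectorUnitary : Matrix (Fin m) (Fin m) ℂ) *
      Matrix.diagonal (fun i => (f (hA.eigenvalues i) : ℂ)) *
      (star (hA.eigenvectorUnitary : Matrix (Fin m) (Fin m) ℂ))
  else 0

/-- The unique positive definite square root of a positive definite matrix
(realized via the spectral decomposition). -/
noncomputable def msqrt {m : ℕ} (A : Matrix (Fin m) (Fin m) ℂ) : Matrix (Fin m) (Fin m) ℂ :=
  matFun Real.sqrt A

/-- The logarithm of a positive definite matrix: the unique Hermitian `L` with `exp L = A`. -/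
noncomputable def mlog {m : ℕ} (A : Matrix (Fin m) (Fin m) ℂ) : Matrix (Fin m) (Fin m) ℂ :=
  matFun Real.log A

/-- The real power `A ^ t` of a positive definite matrix, via the spectral decomposition. -/
noncomputable def mpow {m : ℕ} (A : Matrix (Fin m) (Fin m) ℂ) (t : ℝ) : Matrix (Fin m) (Fin m) ℂ :=
  matFun (fun x => x ^ t) A

/-- The matrix geometric mean `A # B`. -/
noncomputable def gmean {m : ℕ} (A B : Matrix (Fin m) (Fin m) ℂ) : Matrix (Fin m) (Fin m) ℂ :=
  msqrt A * msqrt ((msqrt A)⁻¹ * B * (msqrt A)⁻¹) * msqrt A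

/-- The weighted geometric mean `A #_t B`. -/
noncomputable def wgmean {m : ℕ} (A B : Matrix (Fin m) (Fin m) ℂ) (t : ℝ) :
    Matrix (Fin m) (Fin m) ℂ :=
  msqrt A * mpow ((msqrt A)⁻¹ * B * (msqrt A)⁻¹) t * msqrt A

/-- The Frobenius (Hilbert–Schmidt) norm `‖X‖₂ = (Tr(X*X))^{1/2}`. -/
noncomputable def fnorm {m : ℕ} (X : Matrix (Fin m) (Fin m) ℂ) : ℝ :=
  Real.sqrt ((Xᴴ * X).trace.re)

/-- The Riemannian metric `δ(A,B) = ‖log(A^{-1/2} B A^{-1/2})‖₂`. -/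
noncomputable def rdist {m : ℕ} (A B : Matrix (Fin m) (Fin m) ℂ) : ℝ :=
  fnorm (mlog ((msqrt A)⁻¹ * B * (msqrt A)⁻¹))

/-- The Loewner order: `A ≤ B` iff `B - A` is positive semidefinite. -/
def Loewner {m : ℕ} (A B : Matrix (Fin m) (Fin m) ℂ) : Prop :=
  (B - A).PosSemidef

open scoped Ring

section GeomMean

open CFC

variable {R : Type*} [PartialOrder R] [Ring R] [StarRing R] [TopologicalSpace R]
  [StarOrderedRing R] [Algebra ℝ R] [ContinuousFunctionalCalculus ℝ R IsSelfAdjoint]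
  [NonnegSpectrumClass ℝ R]

/-- The geometric mean `a # b = a^{1/2} (a^{-1/2} b a^{-1/2})^{1/2} a^{1/2}`, the counterpart of
`gmean` in a star-ordered algebra with continuous functional calculus. The inner conjugation is by
`(a⁻¹)^{1/2} = (a^{1/2})⁻¹`; if `a` is not invertible then `a⁻¹ʳ = 0` and the value is `0`. -/
noncomputable def geomMean [SeparatelyContinuousMul R] (a b : R) : R :=
  conjSqrt a (sqrt (conjSqrt a⁻¹ʳ b))

lemma conjSqrt_nonneg [SeparatelyContinuousMul R] {a b : R} (hb : 0 ≤ b) : 0 ≤ conjSqrt a b := by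
  simpa only [map_zero] using conjSqrt_le_conjSqrt (c := a) hb

variable [IsSemitopologicalRing R] [T2Space R] {a b : R}

lemma two_smul_sqrt_le_one_add (ha : 0 ≤ a) : (2 : ℝ) • sqrt a ≤ 1 + a := by
  have hsq : (1 - sqrt a) * (1 - sqrt a) = 1 + a - (2 : ℝ) • sqrt a := by
    rw [two_smul, mul_sub, sub_mul, sub_mul, sqrt_mul_sqrt_self a]
    noncomm_ring
  have hnonneg : 0 ≤ (1 - sqrt a) * (1 - sqrt a) := IsSelfAdjoint.mul_self_nonneg (by cfc_tac)
  rwa [hsq, sub_nonneg] at hnonneg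

lemma two_smul_geomMean_le_add (ha : IsStrictlyPositive a) (hb : 0 ≤ b) :
    (2 : ℝ) • geomMean a b ≤ a + b :=
  calc (2 : ℝ) • geomMean a b
      = conjSqrt a ((2 : ℝ) • sqrt (conjSqrt a⁻¹ʳ b)) := by rw [geomMean, map_smul]
    _ ≤ conjSqrt a (1 + conjSqrt a⁻¹ʳ b) :=
        conjSqrt_le_conjSqrt (two_smul_sqrt_le_one_add (conjSqrt_nonneg hb))
    _ = a + b := by rw [map_add, conjSqrt_one a, conjSqrt_conjSqrt_ringInverse a b]

lemma ringInverse_geomMean (ha : IsStrictlyPositive a) :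
    (geomMean a b)⁻¹ʳ = geomMean a⁻¹ʳ b⁻¹ʳ := by
  rw [geomMean, geomMean, ringInverse_conjSqrt a, ← sqrt_ringInverse,
    ringInverse_conjSqrt a⁻¹ʳ b ha.ringInverse]

lemma isStrictlyPositive_geomMean (ha : IsStrictlyPositive a) (hb : IsStrictlyPositive b) :
    IsStrictlyPositive (geomMean a b) := by
  have hc : IsStrictlyPositive (conjSqrt a⁻¹ʳ b) :=
    (isStrictlyPositive_conjSqrt_iff _ b ha.ringInverse).2 hb
  exact (isStrictlyPositive_conjSqrt_iff a _).2 (.sqrt _ hc)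

end GeomMean

lemma ringInverse_smul {𝕜 R : Type*} [Field 𝕜] [Ring R] [Algebra 𝕜 R] {c : 𝕜} (hc : c ≠ 0) (a : R) :
    (c • a)⁻¹ʳ = c⁻¹ • a⁻¹ʳ := by
  have hinv : (algebraMap 𝕜 R c)⁻¹ʳ = algebraMap 𝕜 R c⁻¹ :=
    Ring.inverse_unit (Units.map (algebraMap 𝕜 R : 𝕜 →* R) (Units.mk0 c hc))
  have hunit : IsUnit (algebraMap 𝕜 R c) := hc.isUnit.map _
  rw [Algebra.smul_def, Ring.inverse_mul (.inl hunit), hinv, ← Algebra.commutes, Algebra.smul_def]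

section CStarAlgebra

variable {R : Type*} [CStarAlgebra R] [PartialOrder R] [StarOrderedRing R] {a b : R}

lemma geomMean_le_half_smul_add (ha : IsStrictlyPositive a) (hb : 0 ≤ b) :
    geomMean a b ≤ (1 / 2 : ℝ) • (a + b) := by
  rw [one_div, le_inv_smul_iff_of_pos two_pos]
  exact two_smul_geomMean_le_add ha hb

lemma two_smul_ringInverse_add_le_geomMean
    (ha : IsStrictlyPositive a) (hb : IsStrictlyPositive b) :
    (2 : ℝ) • (a⁻¹ʳ + b⁻¹ʳ)⁻¹ʳ ≤ geomMean a b := by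
  have hinv : (2 : ℝ) • (geomMean a b)⁻¹ʳ ≤ a⁻¹ʳ + b⁻¹ʳ := by
    rw [ringInverse_geomMean ha]
    exact two_smul_geomMean_le_add ha.ringInverse hb.ringInverse.nonneg
  have hg := isStrictlyPositive_geomMean ha hb
  rw [← le_inv_smul_iff_of_pos two_pos]
  calc (a⁻¹ʳ + b⁻¹ʳ)⁻¹ʳ
      ≤ ((2 : ℝ) • (geomMean a b)⁻¹ʳ)⁻¹ʳ :=
        CStarAlgebra.ringInverse_le_ringInverse hinv (hg.ringInverse.smul two_pos)
    _ = (2 : ℝ)⁻¹ • geomMean a b := by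
        rw [ringInverse_smul two_ne_zero, Ring.inverse_inverse hg.isUnit]

theorem gmean_agm_inequality_general (ha : IsStrictlyPositive a) (hb : IsStrictlyPositive b) :
    (2 : ℝ) • (a⁻¹ʳ + b⁻¹ʳ)⁻¹ʳ ≤ geomMean a b ∧ geomMean a b ≤ (1 / 2 : ℝ) • (a + b) :=
  ⟨two_smul_ringInverse_add_le_geomMean ha hb, geomMean_le_half_smul_add ha hb.nonneg⟩

end CStarAlgebra

section Matrix

open scoped MatrixOrder

variable {m : ℕ} {A B : Matrix (Fin m) (Fin m) ℂ}

lemma matFun_eq_cfc (f : ℝ → ℝ) (hA : A.IsHermitian) : matFun f A = cfc f A := by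
  rw [matFun, dif_pos hA, hA.cfc_eq]
  rfl

lemma msqrt_eq_sqrt (hA : A.PosSemidef) : msqrt A = CFC.sqrt A := by
  rw [msqrt, matFun_eq_cfc _ hA.isHermitian, CFC.sqrt_eq_real_sqrt A hA.nonneg, cfcₙ_eq_cfc]

lemma gmean_eq_geomMean (hA : A.PosSemidef) (hB : B.PosSemidef) : gmean A B = geomMean A B := by
  have hconj : (msqrt A)⁻¹ * B * (msqrt A)⁻¹ = CFC.conjSqrt A⁻¹ʳ B := by
    rw [msqrt_eq_sqrt hA, nonsing_inv_eq_ringInverse, CFC.conjSqrt_apply, CFC.sqrt_ringInverse]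
  have hpsd : (CFC.conjSqrt A⁻¹ʳ B).PosSemidef := (conjSqrt_nonneg hB.nonneg).posSemidef
  rw [gmean, hconj, msqrt_eq_sqrt hpsd, msqrt_eq_sqrt hA]
  rfl

end Matrix

/-- The AGM inequality: `2(A⁻¹ + B⁻¹)⁻¹ ≤ A # B ≤ (1/2)(A + B)` in the Loewner order. -/
theorem gmean_agm_inequality {m : ℕ} (A B : Matrix (Fin m) (Fin m) ℂ)
    (hA : A.PosDef) (hB : B.PosDef) :
    Loewner ((2 : ℂ) • (A⁻¹ + B⁻¹)⁻¹) (gmean A B) ∧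
      Loewner (gmean A B) (((1 : ℂ) / 2) • (A + B)) := by
  open scoped MatrixOrder Matrix.Norms.L2Operator in
  simpa [Loewner, ← le_iff, gmean_eq_geomMean hA.posSemidef hB.posSemidef,
    nonsing_inv_eq_ringInverse, ← Complex.coe_smul] using
    gmean_agm_inequality_general hA.isStrictlyPositive hB.isStrictlyPositive
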